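/- arXiv:2005.06694 — 4 statements merged into one kernel-verified Lean document; each statement's English description precedes it below -/
import Mathlib

section
/- Let Ā ∈ ℝ^{n×n}, B̄ ∈ ℝ^{n×m}, let P ∈ ℝ^{n×n} be symmetric positive definite, and let α ≥ 0 be such that the block matrix [[ĀᵀP + PĀ + αP, PB̄], [B̄ᵀP, −αI_m]] is negative semidefinite. Let t₀ ∈ ℝ, let w : ℝ → ℝᵐ satisfy ‖w(t)‖ ≤ 1 for all t, and let z : ℝ → ℝⁿ be differentiable with z'(t) = Ā z(t) + B̄ w(t) for all t ≥ t₀. If z(t₀)ᵀ P z(t₀) ≤ 1, then z(t)ᵀ P z(t) ≤ 1 for all t ≥ t₀; i.e., the ellipsoid E(P,0) = {q ∈ ℝⁿ : qᵀPq ≤ 1} is positively invariant for the disturbed linear system ż = Āz + B̄w. -/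
/-!
Along a trajectory, `V t = z(t)ᵀ P z(t)` has derivative `żᵀ P z + zᵀ P ż`, where
`ż = Ā z + B̄ w`. The matrix inequality
evaluated at the stacked vector `(z, w)` says exactly that this is at most `α (‖w‖² - V)`
(`lyapunov_rate_le`), hence at most `α (1 - V)`. So `exp (α t) * (V t - 1)` is nonincreasing
on `[t₀, ∞)`; being nonpositive at `t₀`, it stays nonpositive.
-/

open Matrix

theorem hasDerivAt_quadForm {n : ℕ} (P : Matrix (Fin n) (Fin n) ℝ) {z : ℝ → Fin n → ℝ}
    {z' : Fin n → ℝ} {t : ℝ} (hz : HasDerivAt z z' t) :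
    HasDerivAt (fun s => z s ⬝ᵥ P.mulVec (z s))
      (z' ⬝ᵥ P.mulVec (z t) + z t ⬝ᵥ P.mulVec z') t := by
  have hz' := hasDerivAt_pi.1 hz
  simp only [dotProduct, mulVec, ← Finset.sum_add_distrib]
  exact HasDerivAt.fun_sum fun i _ =>
    (hz' i).mul (HasDerivAt.fun_sum fun j _ => (hz' j).const_mul (P i j))

/-- The matrix inequality tested on the stacked vector `(z, w)`: it bounds the rate of change of
`zᵀ P z` along the vector field `Ā z + B̄ w`. -/
theorem lyapunov_rate_le {n m : ℕ} (A : Matrix (Fin n) (Fin n) ℝ) (B : Matrix (Fin n) (Fin m) ℝ)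
    (P : Matrix (Fin n) (Fin n) ℝ) (α : ℝ)
    (hLMI : ∀ x : Fin n ⊕ Fin m → ℝ,
      x ⬝ᵥ (Matrix.fromBlocks (Aᵀ * P + P * A + α • P) (P * B)
        (Bᵀ * P) (-(α • (1 : Matrix (Fin m) (Fin m) ℝ)))).mulVec x ≤ 0)
    (z : Fin n → ℝ) (w : Fin m → ℝ) :
    (A.mulVec z + B.mulVec w) ⬝ᵥ P.mulVec z + z ⬝ᵥ P.mulVec (A.mulVec z + B.mulVec w)
      ≤ α * (w ⬝ᵥ w - z ⬝ᵥ P.mulVec z) := by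
  have h := hLMI (Sum.elim z w)
  have hA : z ⬝ᵥ (Aᵀ).mulVec (P.mulVec z) = A.mulVec z ⬝ᵥ P.mulVec z := by
    rw [dotProduct_mulVec, vecMul_transpose]
  have hB : w ⬝ᵥ (Bᵀ).mulVec (P.mulVec z) = B.mulVec w ⬝ᵥ P.mulVec z := by
    rw [dotProduct_mulVec, vecMul_transpose]
  rw [fromBlocks_mulVec, sumElim_dotProduct_sumElim] at h
  simp only [Sum.elim_comp_inl, Sum.elim_comp_inr, add_mulVec, neg_mulVec, smul_mulVec,
    one_mulVec, dotProduct_add, dotProduct_neg, dotProduct_smul, smul_eq_mul,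
    ← mulVec_mulVec, hA, hB] at h
  simp only [mulVec_add, dotProduct_add, add_dotProduct]
  linarith

/-- Positive invariance of the ellipsoid `E(P,0) = {q : qᵀPq ≤ 1}` for the
disturbed linear system `ż = Āz + B̄w`, `‖w(t)‖ ≤ 1`, under the invariant-ellipsoid LMI
`[[ĀᵀP + PĀ + αP, PB̄], [B̄ᵀP, −αI]] ⪯ 0` with `P` symmetric positive definite and `α ≥ 0`. -/
theorem ellipsoid_positively_invariant
    {n m : ℕ} (Abar : Matrix (Fin n) (Fin n) ℝ) (Bbar : Matrix (Fin n) (Fin m) ℝ)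
    (P : Matrix (Fin n) (Fin n) ℝ) (hP : P.PosDef) (α : ℝ) (hα : 0 ≤ α)
    (hLMI : ∀ x : Fin n ⊕ Fin m → ℝ,
      x ⬝ᵥ (Matrix.fromBlocks (Abarᵀ * P + P * Abar + α • P) (P * Bbar)
        (Bbarᵀ * P) (-(α • (1 : Matrix (Fin m) (Fin m) ℝ)))).mulVec x ≤ 0)
    (t₀ : ℝ) (w : ℝ → EuclideanSpace ℝ (Fin m)) (hw : ∀ t, ‖w t‖ ≤ 1)
    (z : ℝ → Fin n → ℝ) (hz : Differentiable ℝ z)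
    (hode : ∀ t, t₀ ≤ t → deriv z t = Abar.mulVec (z t) + Bbar.mulVec (w t))
    (h0 : z t₀ ⬝ᵥ P.mulVec (z t₀) ≤ 1) :
    ∀ t, t₀ ≤ t → z t ⬝ᵥ P.mulVec (z t) ≤ 1 := by
  set V : ℝ → ℝ := fun t => z t ⬝ᵥ P.mulVec (z t) with hV
  have hVd (t : ℝ) := hasDerivAt_quadForm P (hz t).hasDerivAt
  have hrate : ∀ t, t₀ ≤ t →
      deriv z t ⬝ᵥ P.mulVec (z t) + z t ⬝ᵥ P.mulVec (deriv z t) ≤ α * (1 - V t) := by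
    intro t ht
    have hw1 : (w t : Fin m → ℝ) ⬝ᵥ (w t : Fin m → ℝ) ≤ 1 := by
      have h1 : (w t : Fin m → ℝ) ⬝ᵥ (w t : Fin m → ℝ) = ‖w t‖ ^ 2 := by
        rw [EuclideanSpace.real_norm_sq_eq]
        simp [dotProduct, sq]
      rw [h1]
      exact pow_le_one₀ (norm_nonneg _) (hw t)
    rw [hode t ht]
    exact (lyapunov_rate_le Abar Bbar P α hLMI (z t) (w t)).trans
      (mul_le_mul_of_nonneg_left (sub_le_sub_right hw1 _) hα)
  have hW (t : ℝ) := (((hasDerivAt_id t).const_mul α).exp).mul ((hVd t).sub_const 1)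
  have hanti : AntitoneOn (fun t => Real.exp (α * t) * (V t - 1)) (Set.Ici t₀) := by
    refine antitoneOn_of_deriv_nonpos (convex_Ici t₀)
      (fun t _ => (hW t).continuousAt.continuousWithinAt)
      (fun t _ => (hW t).differentiableAt.differentiableWithinAt) fun t ht => ?_
    rw [interior_Ici] at ht
    refine (hW t).deriv.trans_le ?_
    have h := mul_le_mul_of_nonneg_left (hrate t (le_of_lt ht)) (Real.exp_pos (α * t)).le
    simp only [id, hV] at h ⊢
    linarith
  intro t ht
  have h := hanti Set.self_mem_Ici ht ht
  have h2 : Real.exp (α * t₀) * (V t₀ - 1) ≤ 0 :=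
    mul_nonpos_of_nonneg_of_nonpos (Real.exp_pos _).le (sub_nonpos.2 h0)
  exact sub_nonpos.1 (nonpos_of_mul_nonpos_right (h.trans h2) (Real.exp_pos _))
end

section
/- Let Ā ∈ ℝ^{n×n}, B̄ ∈ ℝ^{n×m}, α > 0, and let Q ∈ ℝ^{n×n} be symmetric positive definite satisfying the Lyapunov equation ĀQ + QĀᵀ + αQ + α^{−1} B̄B̄ᵀ = 0. Then P := Q^{−1} is symmetric positive definite and the block matrix [[ĀᵀP + PĀ + αP, PB̄], [B̄ᵀP, −αI_m]] is negative semidefinite. -/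
open Matrix

/-!
Write `P = Q⁻¹`. Multiplying the Lyapunov equation by `P` on both sides gives
`ĀᵀP + PĀ + αP = -α⁻¹ P B̄ B̄ᵀ P`, so the Schur complement of the block `-αI` vanishes and the
block matrix is exactly `-α RᵀR` with `R = [α⁻¹ B̄ᵀP, -I]`. Its quadratic form at `x` is therefore
`-α (Rx ⬝ᵥ Rx) ≤ 0`.
-/

/-- The Lyapunov equation multiplied by `Q⁻¹` on the left and on the right. -/
lemma lyapunov_congruence_inv
    {n m : ℕ} (A : Matrix (Fin n) (Fin n) ℝ) (B : Matrix (Fin n) (Fin m) ℝ)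
    (α : ℝ) (Q : Matrix (Fin n) (Fin n) ℝ) (hQ : IsUnit Q.det)
    (hLyap : A * Q + Q * Aᵀ + α • Q + α⁻¹ • (B * Bᵀ) = 0) :
    Aᵀ * Q⁻¹ + Q⁻¹ * A + α • Q⁻¹ = -(α⁻¹ • (Q⁻¹ * B * (Bᵀ * Q⁻¹))) := by
  have h : Q⁻¹ * (A * Q + Q * Aᵀ + α • Q + α⁻¹ • (B * Bᵀ)) * Q⁻¹ = 0 := by simp [hLyap]
  have h₁ : Q⁻¹ * (A * Q) * Q⁻¹ = Q⁻¹ * A := by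
    rw [← Matrix.mul_assoc, Matrix.mul_nonsing_inv_cancel_right _ _ hQ]
  have h₂ : Q⁻¹ * (Q * Aᵀ) * Q⁻¹ = Aᵀ * Q⁻¹ := by
    rw [Matrix.nonsing_inv_mul_cancel_left _ _ hQ]
  have h₃ : Q⁻¹ * Q * Q⁻¹ = Q⁻¹ := by rw [Matrix.nonsing_inv_mul _ hQ, Matrix.one_mul]
  have h₄ : Q⁻¹ * (B * Bᵀ) * Q⁻¹ = Q⁻¹ * B * (Bᵀ * Q⁻¹) := by simp only [Matrix.mul_assoc]
  simp only [Matrix.mul_add, Matrix.add_mul, Matrix.mul_smul, Matrix.smul_mul,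
    h₁, h₂, h₃, h₄] at h
  rw [← eq_neg_iff_add_eq_zero] at h
  rw [← h, add_comm (Aᵀ * Q⁻¹)]


/-- If `Q` is a symmetric positive definite solution of the α-parameterized
Lyapunov equation `ĀQ + QĀᵀ + αQ + α⁻¹ B̄B̄ᵀ = 0` with `α > 0`, then `P := Q⁻¹` is symmetric
positive definite and the block matrix `[[ĀᵀP + PĀ + αP, PB̄], [B̄ᵀP, −αI]]` is negative
semidefinite (its quadratic form is nonpositive). -/
theorem lyapunov_solution_inverse_feasible_for_lmi
    {n m : ℕ} (Abar : Matrix (Fin n) (Fin n) ℝ) (Bbar : Matrix (Fin n) (Fin m) ℝ)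
    (α : ℝ) (hα : 0 < α)
    (Q : Matrix (Fin n) (Fin n) ℝ) (hQ : Q.PosDef)
    (hLyap : Abar * Q + Q * Abarᵀ + α • Q + α⁻¹ • (Bbar * Bbarᵀ) = 0) :
    (Q⁻¹).PosDef ∧
    (∀ x : Fin n ⊕ Fin m → ℝ,
      x ⬝ᵥ (Matrix.fromBlocks (Abarᵀ * Q⁻¹ + Q⁻¹ * Abar + α • Q⁻¹) (Q⁻¹ * Bbar)
        (Bbarᵀ * Q⁻¹) (-(α • (1 : Matrix (Fin m) (Fin m) ℝ)))).mulVec x ≤ 0) := by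
  have hP : (Q⁻¹).PosDef := hQ.inv
  have hPt : (Q⁻¹)ᵀ = Q⁻¹ := by simpa using hP.isHermitian.eq
  refine ⟨hP, fun x => ?_⟩
  rw [lyapunov_congruence_inv Abar Bbar α Q ((Matrix.isUnit_iff_isUnit_det Q).mp hQ.isUnit) hLyap]
  -- `R = [α⁻¹ B̄ᵀP, -I]`, so that `-α RᵀR` has the off-diagonal blocks `PB̄`, `B̄ᵀP`.
  let R : Matrix (Fin m) (Fin n ⊕ Fin m) ℝ := Matrix.fromCols (α⁻¹ • (Bbarᵀ * Q⁻¹)) (-1)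
  have hM : Matrix.fromBlocks (-(α⁻¹ • (Q⁻¹ * Bbar * (Bbarᵀ * Q⁻¹)))) (Q⁻¹ * Bbar)
      (Bbarᵀ * Q⁻¹) (-(α • (1 : Matrix (Fin m) (Fin m) ℝ))) = -(α • (Rᵀ * R)) := by
    simp only [R, Matrix.transpose_fromCols, Matrix.fromRows_mul_fromCols, Matrix.fromBlocks_smul,
      Matrix.fromBlocks_neg, Matrix.transpose_smul, Matrix.transpose_mul, Matrix.transpose_neg,
      Matrix.transpose_transpose, Matrix.transpose_one, hPt]
    congr 1 <;> simp [smul_smul, hα.ne']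
  have hR : x ⬝ᵥ (Rᵀ * R) *ᵥ x = (R *ᵥ x) ⬝ᵥ (R *ᵥ x) := by
    rw [← Matrix.mulVec_mulVec, Matrix.dotProduct_mulVec, Matrix.vecMul_transpose]
  have hnn : 0 ≤ (R *ᵥ x) ⬝ᵥ (R *ᵥ x) := Finset.sum_nonneg fun i _ => mul_self_nonneg _
  rw [hM, Matrix.neg_mulVec, Matrix.smul_mulVec, dotProduct_neg, dotProduct_smul, hR, smul_eq_mul]
  exact neg_nonpos.mpr (mul_nonneg hα.le hnn)
end

section
/- Let l ≠ 0 and let x, y, ψ, δ, v, a, u₁, u₂ : ℝ → ℝ be functions such that for all t ∈ ℝ: x'(t) = v(t) cos ψ(t), y'(t) = v(t) sin ψ(t), ψ'(t) = (v(t)/l) tan δ(t), δ'(t) = u₂(t), v'(t) = a(t), a'(t) = u₁(t), where v, a, ψ, δ are differentiable, u₁, u₂ are continuous, and cos δ(t) ≠ 0 for all t. Then x is three times differentiable and y is three times differentiable, and for all t: x'''(t) = cos ψ(t) · u₁(t) − (v(t)² sin ψ(t)/(l cos² δ(t))) · u₂(t) − 3 a(t) ψ'(t) sin ψ(t) − v(t)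 ψ'(t)² cos ψ(t), and y'''(t) = sin ψ(t) · u₁(t) + (v(t)² cos ψ(t)/(l cos² δ(t))) · u₂(t) + 3 a(t) ψ'(t) cos ψ(t) − v(t) ψ'(t)² sin ψ(t). -/
/-! With `ω = ψ' = (v / l) tan δ`, differentiating the planar velocity `v (cos ψ, sin ψ)` twice gives,
for the first coordinate, `a cos ψ - v ω sin ψ` and then
`u₁ cos ψ - 2 a ω sin ψ - v ω' sin ψ - v ω² cos ψ`, and likewise for the second. Since
`ω' = (a / l) tan δ + (v / l) u₂ / cos² δ`, one has `v ω' = a ω + v² u₂ / (l cos² δ)`: this supplies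
the third copy of `a ω` and the coefficient of `u₂`. -/

open Real

/-- Feedback-linearization identity for the dynamically extended
Ackermann-drive model (equation (24) of the paper). Under the kinematic equations
`x' = v cos ψ`, `y' = v sin ψ`, `ψ' = (v/l) tan δ`, `δ' = u₂`, `v' = a`, `a' = u₁`, with
`u₁, u₂` continuous and `cos δ(t) ≠ 0` for all `t`, the position outputs `x` and `y` are
three times differentiable and
`x''' = cos ψ · u₁ − (v² sin ψ/(l cos² δ)) u₂ − 3 a ψ' sin ψ − v ψ'² cos ψ`,
`y''' = sin ψ · u₁ + (v² cos ψ/(l cos² δ)) u₂ + 3 a ψ' cos ψ − v ψ'² sin ψ`. -/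
theorem ackermann_third_derivative_of_position
    (l : ℝ) (hl : l ≠ 0)
    (x y ψ δ v a u₁ u₂ : ℝ → ℝ)
    (hx : ∀ t, HasDerivAt x (v t * Real.cos (ψ t)) t)
    (hy : ∀ t, HasDerivAt y (v t * Real.sin (ψ t)) t)
    (hψ : ∀ t, HasDerivAt ψ (v t / l * Real.tan (δ t)) t)
    (hδ : ∀ t, HasDerivAt δ (u₂ t) t)
    (hv : ∀ t, HasDerivAt v (a t) t)
    (ha : ∀ t, HasDerivAt a (u₁ t) t)
    (hu₁ : Continuous u₁) (hu₂ : Continuous u₂)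
    (hcos : ∀ t, Real.cos (δ t) ≠ 0) :
    (Differentiable ℝ x ∧ Differentiable ℝ (deriv x) ∧ Differentiable ℝ (deriv (deriv x))) ∧
    (Differentiable ℝ y ∧ Differentiable ℝ (deriv y) ∧ Differentiable ℝ (deriv (deriv y))) ∧
    (∀ t, deriv (deriv (deriv x)) t =
      Real.cos (ψ t) * u₁ t - (v t ^ 2 * Real.sin (ψ t) / (l * Real.cos (δ t) ^ 2)) * u₂ t
        - 3 * a t * deriv ψ t * Real.sin (ψ t) - v t * (deriv ψ t) ^ 2 * Real.cos (ψ t)) ∧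
    (∀ t, deriv (deriv (deriv y)) t =
      Real.sin (ψ t) * u₁ t + (v t ^ 2 * Real.cos (ψ t) / (l * Real.cos (δ t) ^ 2)) * u₂ t
        + 3 * a t * deriv ψ t * Real.cos (ψ t) - v t * (deriv ψ t) ^ 2 * Real.sin (ψ t)) := by
  have hω : ∀ t, HasDerivAt (fun s => v s / l * Real.tan (δ s))
      (a t / l * Real.tan (δ t) + v t / l * (1 / Real.cos (δ t) ^ 2 * u₂ t)) t := fun t =>
    ((hv t).div_const l).mul ((Real.hasDerivAt_tan (hcos t)).comp t (hδ t))
  have dψ : deriv ψ = fun t => v t / l * Real.tan (δ t) := funext fun t => (hψ t).deriv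
  have dx : deriv x = fun t => v t * Real.cos (ψ t) := funext fun t => (hx t).deriv
  have dy : deriv y = fun t => v t * Real.sin (ψ t) := funext fun t => (hy t).deriv
  have hx₂ : ∀ t, HasDerivAt (deriv x)
      (a t * Real.cos (ψ t) - v t * (v t / l * Real.tan (δ t)) * Real.sin (ψ t)) t := fun t => by
    rw [dx]
    exact ((hv t).mul (hψ t).cos).congr_deriv (by ring)
  have hy₂ : ∀ t, HasDerivAt (deriv y)
      (a t * Real.sin (ψ t) + v t * (v t / l * Real.tan (δ t)) * Real.cos (ψ t)) t := fun t => by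
    rw [dy]
    exact ((hv t).mul (hψ t).sin).congr_deriv (by ring)
  have hx₃ : ∀ t, HasDerivAt (deriv (deriv x))
      (Real.cos (ψ t) * u₁ t - (v t ^ 2 * Real.sin (ψ t) / (l * Real.cos (δ t) ^ 2)) * u₂ t
        - 3 * a t * deriv ψ t * Real.sin (ψ t)
        - v t * (deriv ψ t) ^ 2 * Real.cos (ψ t)) t := fun t => by
    rw [funext fun s => (hx₂ s).deriv, dψ]
    exact (((ha t).mul (hψ t).cos).sub (((hv t).mul (hω t)).mul (hψ t).sin)).congr_deriv
      (by simp only [Pi.mul_apply]; ring)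
  have hy₃ : ∀ t, HasDerivAt (deriv (deriv y))
      (Real.sin (ψ t) * u₁ t + (v t ^ 2 * Real.cos (ψ t) / (l * Real.cos (δ t) ^ 2)) * u₂ t
        + 3 * a t * deriv ψ t * Real.cos (ψ t)
        - v t * (deriv ψ t) ^ 2 * Real.sin (ψ t)) t := fun t => by
    rw [funext fun s => (hy₂ s).deriv, dψ]
    exact (((ha t).mul (hψ t).sin).add (((hv t).mul (hω t)).mul (hψ t).cos)).congr_deriv
      (by simp only [Pi.mul_apply]; ring)
  exact ⟨⟨fun t => (hx t).differentiableAt, fun t => (hx₂ t).differentiableAt,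
      fun t => (hx₃ t).differentiableAt⟩,
    ⟨fun t => (hy t).differentiableAt, fun t => (hy₂ t).differentiableAt,
      fun t => (hy₃ t).differentiableAt⟩,
    fun t => (hx₃ t).deriv, fun t => (hy₃ t).deriv⟩
end

section
/- Let l ≠ 0 and let x, y, ψ, δ, v, a : ℝ → ℝ satisfy, for all t ∈ ℝ: x'(t) = v(t) cos ψ(t), y'(t) = v(t) sin ψ(t), ψ'(t) = (v(t)/l) tan δ(t), δ'(t) = u₂(t), v'(t) = a(t), a'(t) = u₁(t), with cos δ(t) ≠ 0 and v(t) ≠ 0 for all t, where the inputs are given by the feedback-linearizing law (u₁(t), u₂(t))ᵀ = M(t)^{−1} (𝐯(t) − n(t)) + (w₁(t), w₂(t))ᵀ with M(t) = [[cos ψ(t), −v(t)² sin ψ(t)/(l cos² δ(t))], [sin ψ(t), v(t)² cos ψ(t)/(l cos² δ(t))]], n(t) = (−3 a(t) ψ'(t) sin ψ(t) − v(t) ψ'(t)² cos ψ(t), 3 a(t) ψ'(t) cos ψ(t) − v(t) ψ'(t)² sin ψ(t))ᵀ, 𝐯 : ℝ → ℝ² continuous (the virtual input) and w = (w₁, w₂)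 : ℝ → ℝ² continuous (the input disturbance). Then the output (x, y) is three times differentiable and satisfies (x'''(t), y'''(t))ᵀ = 𝐯(t) + M(t) w(t) for all t. -/
/-!
Differentiating the position output three times along the dynamics, with yaw rate
`p = ψ' = (v / l) tan δ` and `p' = (a / l) tan δ + v u₂ / (l cos² δ)`, makes the inputs appear
for the first time at third order: `(x''', y''')ᵀ = n + M u`. The decoupling matrix has determinant
`v² / (l cos² δ)`, which is nonzero, so multiplying the feedback law by `M` gives
`M u = 𝐯 - n + M w`, and the drift `n` cancels.

The coordinates `x` and `y` are treated together: `y` is obtained from `x` by the phase shift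
`ψ ↦ ψ - π / 2`.
-/

open Real Matrix

/-- Successive derivatives of an output with speed `v` along heading `θ`, where `θ` has the
Ackermann yaw rate. The third one is affine in the inputs `u₁`, `u₂`. -/
lemma ackermann_output_derivs {l : ℝ} {z θ δ v a u₁ u₂ : ℝ → ℝ}
    (hz : ∀ t, HasDerivAt z (v t * Real.cos (θ t)) t)
    (hθ : ∀ t, HasDerivAt θ (v t / l * Real.tan (δ t)) t)
    (hδ : ∀ t, HasDerivAt δ (u₂ t) t)
    (hv : ∀ t, HasDerivAt v (a t) t)
    (ha : ∀ t, HasDerivAt a (u₁ t) t)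
    (hcos : ∀ t, Real.cos (δ t) ≠ 0) :
    (Differentiable ℝ z ∧ Differentiable ℝ (deriv z) ∧ Differentiable ℝ (deriv (deriv z))) ∧
    ∀ t, deriv (deriv (deriv z)) t =
      -3 * a t * (v t / l * Real.tan (δ t)) * Real.sin (θ t)
        - v t * (v t / l * Real.tan (δ t)) ^ 2 * Real.cos (θ t)
        + (Real.cos (θ t) * u₁ t
          + -(v t ^ 2 * Real.sin (θ t)) / (l * Real.cos (δ t) ^ 2) * u₂ t) := by
  have hc (t : ℝ) := (hθ t).cos
  have hs (t : ℝ) := (hθ t).sin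
  have hp (t : ℝ) : HasDerivAt (fun t => v t / l * Real.tan (δ t))
      (a t / l * Real.tan (δ t) + v t / l * (1 / Real.cos (δ t) ^ 2 * u₂ t)) t :=
    ((hv t).div_const l).mul ((Real.hasDerivAt_tan (hcos t)).comp t (hδ t))
  have h1 : deriv z = fun t => v t * Real.cos (θ t) := funext fun t => (hz t).deriv
  have hd1 (t : ℝ) : HasDerivAt (deriv z) (a t * Real.cos (θ t)
      + v t * (-Real.sin (θ t) * (v t / l * Real.tan (δ t)))) t := by
    rw [h1]
    exact (hv t).mul (hc t)
  have h2 : deriv (deriv z) = fun t => a t * Real.cos (θ t)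
      + v t * (-Real.sin (θ t) * (v t / l * Real.tan (δ t))) := funext fun t => (hd1 t).deriv
  have hd2 (t : ℝ) := ((ha t).mul (hc t)).add ((hv t).mul ((hs t).neg.mul (hp t)))
  have hd2' (t : ℝ) := (hd2 t).congr_of_eventuallyEq (f₁ := deriv (deriv z))
    (Filter.Eventually.of_forall fun s => congrFun h2 s)
  refine ⟨⟨fun t => (hz t).differentiableAt, fun t => (hd1 t).differentiableAt,
    fun t => (hd2' t).differentiableAt⟩, fun t => ?_⟩
  rw [(hd2' t).deriv]
  simp only [Pi.neg_apply, Pi.mul_apply]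
  ring

/-- The decoupling matrix of the Ackermann drive is invertible away from zero speed. -/
lemma ackermann_isUnit_det {l ψ δ v : ℝ} (hl : l ≠ 0) (hcos : Real.cos δ ≠ 0) (hv : v ≠ 0) :
    IsUnit (!![Real.cos ψ, -(v ^ 2 * Real.sin ψ) / (l * Real.cos δ ^ 2);
      Real.sin ψ, v ^ 2 * Real.cos ψ / (l * Real.cos δ ^ 2)]).det := by
  have hdet : (!![Real.cos ψ, -(v ^ 2 * Real.sin ψ) / (l * Real.cos δ ^ 2);
      Real.sin ψ, v ^ 2 * Real.cos ψ / (l * Real.cos δ ^ 2)]).det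
      = v ^ 2 / (l * Real.cos δ ^ 2) := by
    rw [Matrix.det_fin_two_of]
    linear_combination v ^ 2 / (l * Real.cos δ ^ 2) * Real.sin_sq_add_cos_sq ψ
  rw [hdet]
  exact (div_ne_zero (pow_ne_zero 2 hv) (mul_ne_zero hl (pow_ne_zero 2 hcos))).isUnit

/-- Feedback linearization with state-dependent noise for the dynamically
extended Ackermann-drive model (the paper's Proposition 2 instantiated for this system).
If the inputs are chosen by the feedback-linearizing law
`(u₁, u₂)ᵀ = M⁻¹(𝐯 − n) + (w₁, w₂)ᵀ` with `M` the decoupling matrix and `n` the drift term,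
then the position output `(x, y)` is three times differentiable and satisfies
`(x''', y''')ᵀ = 𝐯 + M w`. -/
theorem ackermann_feedback_linearization_with_noise
    (l : ℝ) (hl : l ≠ 0)
    (x y ψ δ v a u₁ u₂ : ℝ → ℝ) (V : ℝ → Fin 2 → ℝ) (w₁ w₂ : ℝ → ℝ)
    (hx : ∀ t, HasDerivAt x (v t * Real.cos (ψ t)) t)
    (hy : ∀ t, HasDerivAt y (v t * Real.sin (ψ t)) t)
    (hψ : ∀ t, HasDerivAt ψ (v t / l * Real.tan (δ t)) t)
    (hδ : ∀ t, HasDerivAt δ (u₂ t) t)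
    (hv : ∀ t, HasDerivAt v (a t) t)
    (ha : ∀ t, HasDerivAt a (u₁ t) t)
    (hcos : ∀ t, Real.cos (δ t) ≠ 0) (hvne : ∀ t, v t ≠ 0)
    (hV : Continuous V) (hw₁ : Continuous w₁) (hw₂ : Continuous w₂)
    (hlaw : ∀ t,
      ![u₁ t, u₂ t] =
        (!![Real.cos (ψ t), -(v t ^ 2 * Real.sin (ψ t)) / (l * Real.cos (δ t) ^ 2);
            Real.sin (ψ t), v t ^ 2 * Real.cos (ψ t) / (l * Real.cos (δ t) ^ 2)])⁻¹.mulVec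
          (V t - ![-3 * a t * deriv ψ t * Real.sin (ψ t)
                      - v t * (deriv ψ t) ^ 2 * Real.cos (ψ t),
                   3 * a t * deriv ψ t * Real.cos (ψ t)
                      - v t * (deriv ψ t) ^ 2 * Real.sin (ψ t)])
        + ![w₁ t, w₂ t]) :
    (Differentiable ℝ x ∧ Differentiable ℝ (deriv x) ∧ Differentiable ℝ (deriv (deriv x))) ∧
    (Differentiable ℝ y ∧ Differentiable ℝ (deriv y) ∧ Differentiable ℝ (deriv (deriv y))) ∧
    (∀ t,
      ![deriv (deriv (deriv x)) t, deriv (deriv (deriv y)) t] =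
        V t +
          (!![Real.cos (ψ t), -(v t ^ 2 * Real.sin (ψ t)) / (l * Real.cos (δ t) ^ 2);
              Real.sin (ψ t), v t ^ 2 * Real.cos (ψ t) / (l * Real.cos (δ t) ^ 2)]).mulVec
            ![w₁ t, w₂ t]) := by
  obtain ⟨hxd, hx3⟩ := ackermann_output_derivs hx hψ hδ hv ha hcos
  have hy' (t : ℝ) : HasDerivAt y (v t * Real.cos (ψ t - π / 2)) t := by
    rw [Real.cos_sub_pi_div_two]
    exact hy t
  obtain ⟨hyd, hy3⟩ :=
    ackermann_output_derivs hy' (fun t => (hψ t).sub_const (π / 2)) hδ hv ha hcos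
  refine ⟨hxd, hyd, fun t => ?_⟩
  have hu := congrArg (Matrix.mulVec
    !![Real.cos (ψ t), -(v t ^ 2 * Real.sin (ψ t)) / (l * Real.cos (δ t) ^ 2);
      Real.sin (ψ t), v t ^ 2 * Real.cos (ψ t) / (l * Real.cos (δ t) ^ 2)]) (hlaw t)
  -- `M u = (𝐯 - n) + M w`
  rw [Matrix.mulVec_add, Matrix.mulVec_mulVec,
    Matrix.mul_nonsing_inv _ (ackermann_isUnit_det hl (hcos t) (hvne t)),
    Matrix.one_mulVec, (hψ t).deriv] at hu
  have hu0 := congrFun hu 0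
  have hu1 := congrFun hu 1
  simp [Matrix.vecHead, Matrix.vecTail] at hu0 hu1
  ext i
  fin_cases i
  · simp [hx3]
    linear_combination hu0
  · simp [hy3, Real.sin_sub_pi_div_two, Real.cos_sub_pi_div_two]
    linear_combination hu1
end
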